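/- Let F, G : [0,1] → Mₙ(ℝ) be matrix-valued functions with F continuous, G integrable, and F(s) = I + ∫₀^s G(σ)F(σ) dσ for all s ∈ [0,1]. Then det(F(s)) = exp(∫₀^s tr(G(σ)) dσ) for all s ∈ [0,1]. -/

import Mathlib

open MeasureTheory Filter Set Topology
open scoped ENNReal NNReal

noncomputable section

/-- The underlying set of the Heisenberg group: ℝ³. -/
abbrev HG : Type := ℝ × ℝ × ℝ

namespace Heis

/-- Heisenberg group product. -/
def mul (p q : HG) : HG :=
  (p.1 + q.1, p.2.1 + q.2.1, p.2.2 + q.2.2 + 2 * (q.1 * p.2.1 - p.1 * q.2.1))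

/-- Heisenberg group inverse. -/
def inv (p : HG) : HG := (-p.1, -p.2.1, -p.2.2)

/-- Korányi norm. -/
def knorm (p : HG) : ℝ := ((p.1 ^ 2 + p.2.1 ^ 2) ^ 2 + p.2.2 ^ 2) ^ ((1 : ℝ) / 4)

/-- Heisenberg (Korányi) metric d(p,q) = ‖q⁻¹⋆p‖. -/
def d (p q : HG) : ℝ := knorm (mul (inv q) p)

/-- Open ball for the Heisenberg metric. -/
def ball (p : HG) (r : ℝ) : Set HG := {q | d p q < r}

/-- Heisenberg dilation δ_r. -/
def dil (r : ℝ) (p : HG) : HG := (r * p.1, r * p.2.1, r ^ 2 * p.2.2)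

/-- Pointwise dilatation H_f(p). -/
def dilat (f : HG → HG) (p : HG) : ℝ :=
  limsup (fun r : ℝ =>
      sSup ((fun q => d (f p) (f q)) '' {q | d p q ≤ r}) /
        sInf ((fun q => d (f p) (f q)) '' {q | r ≤ d p q}))
    (nhdsWithin 0 (Ioi 0))

/-- f is a homeomorphism of ℍ. -/
def IsHomeo (f : HG → HG) : Prop :=
  Function.Bijective f ∧ Continuous f ∧ Continuous (Function.invFun f)

/-- f is a quasiconformal mapping of ℍ. -/
def IsQC (f : HG → HG) : Prop := IsHomeo f ∧ ∃ M : ℝ, ∀ p, dilat f p ≤ M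

/-- f is a K-quasiconformal mapping of ℍ. -/
def IsKQC (K : ℝ) (f : HG → HG) : Prop :=
  IsQC f ∧ ∀ᵐ p ∂(volume : Measure HG), dilat f p ≤ K

/-- Jacobian (volume derivative) of a mapping. -/
def jac (f : HG → HG) (p : HG) : ℝ :=
  limsup (fun r : ℝ => (volume (f '' ball p r) / volume (ball p r)).toReal)
    (nhdsWithin 0 (Ioi 0))

/-- The class 𝒬₀(K). -/
def Q0 (K : ℝ) (g : HG → HG) : Prop :=
  IsKQC K g ∧ g 0 = 0 ∧ ∃ p : HG, knorm p = 1 ∧ knorm (g p) = 1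

/-- Integral against a finite signed measure. -/
def svIntegral (μ : SignedMeasure HG) (f : HG → ℝ) : ℝ :=
  (∫ q, f q ∂μ.toJordanDecomposition.posPart) - ∫ q, f q ∂μ.toJordanDecomposition.negPart

/-- Total variation ‖μ‖ of a finite signed measure. -/
def tv (μ : SignedMeasure HG) : ℝ := (μ.totalVariation Set.univ).toReal

/-- μ is an admissible measure: finite signed (Radon) measure with finite logarithmic moment. -/
def Admissible (μ : SignedMeasure HG) : Prop :=
  ∫⁻ q, ENNReal.ofReal (max (Real.log (knorm q)) 0) ∂μ.totalVariation < ⊤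

/-- Logarithmic potential Λ_μ of a signed measure. -/
def logPot (μ : SignedMeasure HG) (p : HG) : ℝ := -svIntegral μ (fun q => Real.log (d p q))

/-- Logarithmic potential Λ_ψ with density ψ. -/
def logPotF (ψ : HG → ℝ) (p : HG) : ℝ := -∫ q, Real.log (d p q) * ψ q

/-- Coordinate curve through p in the i-th horizontal direction. -/
def hcurve (i : Fin 2) (p : HG) (s : ℝ) : HG :=
  if i = 0 then mul p ((s, 0, 0) : HG) else mul p ((0, s, 0) : HG)

/-- i-th classical horizontal derivative (X for i=0, Y for i=1). -/
def hD (i : Fin 2) (φ : HG → ℝ) (p : HG) : ℝ := deriv (fun s : ℝ => φ (hcurve i p s)) 0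

/-- Existence of the i-th classical horizontal derivative at p. -/
def HDiffAt (i : Fin 2) (φ : HG → ℝ) (p : HG) : Prop :=
  DifferentiableAt ℝ (fun s : ℝ => φ (hcurve i p s)) 0

/-- Xφ. -/
def XD (φ : HG → ℝ) : HG → ℝ := hD 0 φ
/-- Yφ. -/
def YD (φ : HG → ℝ) : HG → ℝ := hD 1 φ
/-- Tφ. -/
def TD (φ : HG → ℝ) (p : HG) : ℝ := deriv (fun s : ℝ => φ (mul p ((0, 0, s) : HG))) 0

/-- φ ∈ HC¹ : continuous with continuous classical horizontal derivatives. -/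
def HC1 (φ : HG → ℝ) : Prop :=
  Continuous φ ∧ (∀ p, HDiffAt 0 φ p) ∧ (∀ p, HDiffAt 1 φ p) ∧
    Continuous (XD φ) ∧ Continuous (YD φ)

/-- Zφ = ½(Xφ − iYφ). -/
def ZD (φ : HG → ℝ) (p : HG) : ℂ :=
  (1 / 2 : ℂ) * (Complex.ofReal (XD φ p) - Complex.I * Complex.ofReal (YD φ p))

/-- Classical ZZφ = ¼(XXφ − YYφ − i(XYφ + YXφ)). -/
def ZZD (φ : HG → ℝ) (p : HG) : ℂ :=
  (1 / 4 : ℂ) * (Complex.ofReal (XD (XD φ) p - YD (YD φ) p) -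
    Complex.I * Complex.ofReal (XD (YD φ) p + YD (XD φ) p))

/-- Horizontal X derivative for complex-valued functions. -/
def XDc (ξ : HG → ℂ) (p : HG) : ℂ := deriv (fun s : ℝ => ξ (mul p ((s, 0, 0) : HG))) 0
/-- Horizontal Y derivative for complex-valued functions. -/
def YDc (ξ : HG → ℂ) (p : HG) : ℂ := deriv (fun s : ℝ => ξ (mul p ((0, s, 0) : HG))) 0

/-- ZZ for complex-valued test functions. -/
def ZZc (ξ : HG → ℂ) (p : HG) : ℂ :=
  (1 / 4 : ℂ) * (XDc (XDc ξ) p - YDc (YDc ξ) p - Complex.I * (XDc (YDc ξ) p + YDc (XDc ξ) p))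

/-- u is the distributional derivative ZZφ. -/
def HasDistribZZ (φ : HG → ℝ) (u : HG → ℂ) : Prop :=
  AEStronglyMeasurable u (volume : Measure HG) ∧
  ∀ ξ : HG → ℂ, ContDiff ℝ (⊤ : ℕ∞) ξ → HasCompactSupport ξ →
    ∫ p, u p * ξ p = ∫ p, (Complex.ofReal (φ p)) * ZZc ξ p

/-- u is the weak X-derivative of F. -/
def IsWeakXDeriv (F u : HG → ℝ) : Prop :=
  ∀ ξ : HG → ℝ, ContDiff ℝ (⊤ : ℕ∞) ξ → HasCompactSupport ξ →
    ∫ p, u p * ξ p = -∫ p, F p * XD ξ p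

/-- u is the weak Y-derivative of F. -/
def IsWeakYDeriv (F u : HG → ℝ) : Prop :=
  ∀ ξ : HG → ℝ, ContDiff ℝ (⊤ : ℕ∞) ξ → HasCompactSupport ξ →
    ∫ p, u p * ξ p = -∫ p, F p * YD ξ p

/-- u ∈ L^r_loc. -/
def MemLrLoc (u : HG → ℝ) (r : ℝ) : Prop :=
  LocallyIntegrable (fun p => |u p| ^ r) (volume : Measure HG)

/-- F ∈ HW^{1,r}_loc for every 1 ≤ r < ∞. -/
def MemHW1AllLoc (F : HG → ℝ) : Prop :=
  LocallyIntegrable F (volume : Measure HG) ∧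
  ∃ u v : HG → ℝ, IsWeakXDeriv F u ∧ IsWeakYDeriv F v ∧
    ∀ r : ℝ, 1 ≤ r → MemLrLoc u r ∧ MemLrLoc v r

/-- The contact vector field v_φ = −¼(Yφ)X + ¼(Xφ)Y + φT, in coordinates. -/
def vf (φ : HG → ℝ) (p : HG) : HG :=
  (-(1 / 4) * YD φ p, (1 / 4) * XD φ p,
    -(1 / 4) * YD φ p * (2 * p.2.1) + (1 / 4) * XD φ p * (-(2) * p.1) + φ p)

/-- γ solves the flow equation for v_φ at p. -/
def IsFlowSol (φ : HG → ℝ) (p : HG) (γ : ℝ → HG) : Prop :=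
  γ 0 = p ∧ ∀ s : ℝ, HasDerivAt γ (vf φ (γ s)) s

/-- |γ'(s)|_H. -/
def hnormD (γ : ℝ → HG) (s : ℝ) : ℝ :=
  Real.sqrt ((deriv γ s).1 ^ 2 + (deriv γ s).2.1 ^ 2)

/-- γ is a horizontal curve on [a,b]. -/
def IsHorizontal (γ : ℝ → HG) (a b : ℝ) : Prop :=
  a ≤ b ∧ ContinuousOn γ (Icc a b) ∧
  (∀ s ∈ Ioo a b, DifferentiableAt ℝ γ s) ∧
  ContinuousOn (deriv γ) (Ioo a b) ∧
  ∀ s ∈ Ioo a b,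
    (deriv γ s).2.2 = 2 * (γ s).2.1 * (deriv γ s).1 - 2 * (γ s).1 * (deriv γ s).2.1

/-- γ is piecewise horizontal on [a,b]. -/
def IsPiecewiseHorizontal (γ : ℝ → HG) (a b : ℝ) : Prop :=
  ContinuousOn γ (Icc a b) ∧
  ∃ n : ℕ, ∃ t : Fin (n + 1) → ℝ, Monotone t ∧ t 0 = a ∧ t (Fin.last n) = b ∧
    ∀ i : Fin n, IsHorizontal γ (t i.castSucc) (t i.succ)

/-- Carnot–Carathéodory distance ρ. -/
def ccDist (p q : HG) : ℝ :=
  sInf {L : ℝ | ∃ (γ : ℝ → HG) (a b : ℝ), IsPiecewiseHorizontal γ a b ∧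
    γ a = p ∧ γ b = q ∧ L = ∫ s in a..b, hnormD γ s}

/-- An admissible curve for (p,q). -/
structure AdmCurve (p q : HG) where
  b : ℝ
  hb : 0 ≤ b
  γ : ℝ → HG
  cont : ContinuousOn γ (Icc 0 b)
  h0 : γ 0 = p
  h1 : γ b = q
  E : Set ℝ
  hE : volume E = 0
  ak : ℕ → ℝ
  bk : ℕ → ℝ
  hab : ∀ k, ak k ≤ bk k
  γk : ℕ → ℝ → HG
  hhor : ∀ k, IsHorizontal (γk k) (ak k) (bk k)
  hrep : ∀ s ∈ Icc 0 b \ E, γ s = ∑' k, Set.indicator (Ioo (ak k) (bk k)) (γk k) s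
  hlen : Summable fun k => ∫ s in (ak k)..(bk k), hnormD (γk k) s

/-- ∫_γ w for an admissible curve. -/
def admIntegral {p q : HG} (c : AdmCurve p q) (w : HG → ℝ) : ℝ :=
  ∫ s in Icc 0 c.b \ c.E, w (c.γ s) * hnormD c.γ s

/-- Weighted distance ρ_w. -/
def rhoW (w : HG → ℝ) (p q : HG) : ℝ :=
  sInf {L : ℝ | ∃ c : AdmCurve p q, L = admIntegral c fun u => w u ^ ((1 : ℝ) / 4)}

/-- Γ_u(p,q) = δ_{d(p,q)⁻¹}(u⁻¹⋆p). -/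
def Gam (u p q : HG) : HG := dil (d p q)⁻¹ (mul (inv u) p)

/-- λ_g, depending on a fixed cut-off ξ₀. -/
def lam (g : HG → HG) (ξ₀ : HG → ℝ) (p q : HG) : ℝ :=
  if p = q then 0 else (∫ u, jac g u * ξ₀ (Gam u p q)) ^ ((1 : ℝ) / 4)

/-- The properties required of the fixed cut-off function ξ₀. -/
def IsCutoff (ξ₀ : HG → ℝ) : Prop :=
  ContDiff ℝ (⊤ : ℕ∞) ξ₀ ∧ HasCompactSupport ξ₀ ∧ (∀ p, 0 ≤ ξ₀ p ∧ ξ₀ p ≤ 1) ∧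
    (∀ p ∈ ball (0 : HG) (1 / 4), ξ₀ p = 1) ∧ tsupport ξ₀ ⊆ ball (0 : HG) (1 / 2)

/-- η_g(p,q) = −log λ_g(p, g⁻¹(q)). -/
def etaF (g : HG → HG) (ξ₀ : HG → ℝ) (p q : HG) : ℝ :=
  -Real.log (lam g ξ₀ p (Function.invFun g q))

/-- φ̃_g(p,q). -/
def phiTilde (g : HG → HG) (ξ₀ : HG → ℝ) (p q : HG) : ℝ :=
  if p = Function.invFun g q then 0
  else etaF g ξ₀ p q * (mul (inv (Function.invFun g q)) p).2.2

/-- φ¹_{g,ψ}. -/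
def phi1 (g : HG → HG) (ξ₀ ψ : HG → ℝ) (p : HG) : ℝ := ∫ q, phiTilde g ξ₀ p q * ψ q

/-- φ²_{g,ψ}(x,y,t) = v₁(0) − 4v₂(0)y + 4v₃(0)x. -/
def phi2 (g : HG → HG) (ξ₀ ψ : HG → ℝ) (p : HG) : ℝ :=
  (vf (phi1 g ξ₀ ψ) 0).1 - 4 * (vf (phi1 g ξ₀ ψ) 0).2.1 * p.2.1 +
    4 * (vf (phi1 g ξ₀ ψ) 0).2.2 * p.1

/-- The contact generating potential φ_{g,ψ}. -/
def phiC (g : HG → HG) (ξ₀ ψ : HG → ℝ) (p : HG) : ℝ :=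
  phi1 g ξ₀ ψ p - phi2 g ξ₀ ψ p

/-- k-th smooth regularization ψ_k of μ (with fixed mollifier Ψ). -/
def reg (μ : SignedMeasure HG) (Ψ : HG → ℝ) (k : ℕ) (p : HG) : ℝ :=
  svIntegral μ fun q => (k : ℝ) ^ 4 * Ψ (dil (k : ℝ) (mul (inv q) p))

/-- K(f) = esssup H_f. -/
def Kof (f : HG → HG) : ℝ := essSup (dilat f) (volume : Measure HG)

end Heis

open Heis

theorem aux_hasDerivAt_det (n : ℕ) (A : ℝ → Matrix (Fin n) (Fin n) ℝ)
    (G : Matrix (Fin n) (Fin n) ℝ) (x : ℝ)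
    (h : ∀ i j, HasDerivAt (fun s => A s i j) ((G * A x) i j) x) :
    HasDerivAt (fun s => (A s).det) (G.trace * (A x).det) x := by
  have e : (fun s => (A s).det) = fun s => ∑ σ : Equiv.Perm (Fin n),
      ((Equiv.Perm.sign σ : ℤ) : ℝ) * ∏ i, A s i (σ i) := by
    funext s
    rw [← Matrix.det_transpose, Matrix.det_apply']
    rfl
  rw [e]
  have h1 : HasDerivAt (fun s => ∑ σ : Equiv.Perm (Fin n),
      ((Equiv.Perm.sign σ : ℤ) : ℝ) * ∏ i, A s i (σ i))
      (∑ σ : Equiv.Perm (Fin n), ((Equiv.Perm.sign σ : ℤ) : ℝ) *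
        ∑ i, (∏ j ∈ Finset.univ.erase i, A x j (σ j)) • (G * A x) i (σ i)) x := by
    apply HasDerivAt.fun_sum
    intro σ _
    apply HasDerivAt.const_mul
    apply HasDerivAt.fun_finsetProd
    intro i _
    exact h i (σ i)
  convert h1 using 1
  simp_rw [Finset.mul_sum]
  rw [Finset.sum_comm, Matrix.trace, Finset.sum_mul]
  refine Finset.sum_congr rfl fun i _ => ?_
  have h2 := Matrix.det_updateRow_sum (A x) i (fun k => G i k)
  rw [smul_eq_mul] at h2
  rw [Matrix.diag_apply, ← h2, ← Matrix.det_transpose, Matrix.det_apply']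
  refine Finset.sum_congr rfl fun σ _ => ?_
  congr 1
  rw [← Finset.mul_prod_erase _ _ (Finset.mem_univ i), smul_eq_mul, mul_comm]
  congr 1
  · refine Finset.prod_congr rfl fun j hj => ?_
    simp [Matrix.updateRow_ne (Finset.ne_of_mem_erase hj)]
  · simp [Matrix.mul_apply, Finset.sum_apply]

theorem aux_ac_exp {f : ℝ → ℝ} {a b : ℝ} (hf : AbsolutelyContinuousOnInterval f a b) :
    AbsolutelyContinuousOnInterval (fun x => Real.exp (f x)) a b := by
  obtain ⟨C, hC⟩ := hf.exists_bound
  obtain ⟨K, hK⟩ := (Real.contDiff_exp (n := 1)).contDiffOn.exists_lipschitzOnWith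
    (by decide) (convex_Icc (-C) C) isCompact_Icc
  rw [absolutelyContinuousOnInterval_iff] at hf ⊢
  intro ε hε
  obtain ⟨δ, hδ, H⟩ := hf (ε / (K + 1)) (by positivity)
  refine ⟨δ, hδ, fun E hE hE2 => ?_⟩
  have h3 := H E hE hE2
  have hm : ∀ x ∈ uIcc a b, f x ∈ Icc (-C) C := fun x hx => by
    have := hC x hx
    rw [Real.norm_eq_abs, abs_le] at this
    exact this
  calc ∑ i ∈ Finset.range E.1, dist (Real.exp (f (E.2 i).1)) (Real.exp (f (E.2 i).2))
      ≤ ∑ i ∈ Finset.range E.1, (K + 1) * dist (f (E.2 i).1) (f (E.2 i).2) := by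
        refine Finset.sum_le_sum fun i hi => ?_
        have hi2 := hE.1 i hi
        have := hK.dist_le_mul _ (hm _ hi2.1) _ (hm _ hi2.2)
        nlinarith [dist_nonneg (x := f (E.2 i).1) (y := f (E.2 i).2)]
    _ < ε := by
        rw [← Finset.mul_sum]
        rw [lt_div_iff₀ (by positivity)] at h3
        linarith

theorem aux_ac_const (c a b : ℝ) : AbsolutelyContinuousOnInterval (fun _ : ℝ => c) a b :=
  (contDiffOn_const (c := c)).absolutelyContinuousOnInterval

theorem aux_ii_sum {ι : Type*} (s : Finset ι) (f : ι → ℝ → ℝ) (a b : ℝ)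
    (h : ∀ i, IntervalIntegrable (f i) volume a b) :
    IntervalIntegrable (fun x => ∑ i ∈ s, f i x) volume a b := by
  have := IntervalIntegrable.sum s (f := f) (fun i _ => h i)
  have e : (fun x => ∑ i ∈ s, f i x) = ∑ i ∈ s, f i := by
    ext x
    simp
  rw [e]
  exact this

theorem aux_ac_sum {ι : Type*} (s : Finset ι) (f : ι → ℝ → ℝ) (a b : ℝ)
    (h : ∀ i, AbsolutelyContinuousOnInterval (f i) a b) :
    AbsolutelyContinuousOnInterval (fun x => ∑ i ∈ s, f i x) a b := by
  classical
  induction s using Finset.induction_on with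
  | empty => simpa using aux_ac_const 0 a b
  | insert i s hi ih =>
    simp_rw [Finset.sum_insert hi]
    exact (h i).fun_add ih

theorem aux_ac_prod {ι : Type*} (s : Finset ι) (f : ι → ℝ → ℝ) (a b : ℝ)
    (h : ∀ i, AbsolutelyContinuousOnInterval (f i) a b) :
    AbsolutelyContinuousOnInterval (fun x => ∏ i ∈ s, f i x) a b := by
  classical
  induction s using Finset.induction_on with
  | empty => simpa using aux_ac_const 1 a b
  | insert i s hi ih =>
    simp_rw [Finset.prod_insert hi]
    exact (h i).fun_mul ih

/-- determinant of a solution of a linear matrix integral equation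
(Lemma `lem:dettr`, Bonk–Heinonen–Saksman). -/
theorem stmt11 (n : ℕ) (F G : ℝ → Matrix (Fin n) (Fin n) ℝ)
    (hFcont : ∀ i j, ContinuousOn (fun s => F s i j) (Icc (0 : ℝ) 1))
    (hGint : ∀ i j, IntegrableOn (fun s => G s i j) (Icc (0 : ℝ) 1))
    (hODE : ∀ s ∈ Icc (0 : ℝ) 1, ∀ i j,
      F s i j = (1 : Matrix (Fin n) (Fin n) ℝ) i j + ∫ σ in (0 : ℝ)..s, (G σ * F σ) i j) :
    ∀ s ∈ Icc (0 : ℝ) 1,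
      (F s).det = Real.exp (∫ σ in (0 : ℝ)..s, (G σ).trace) := by
  intro s hs
  have hu : uIcc (0 : ℝ) 1 = Icc 0 1 := uIcc_of_le zero_le_one
  have hGF : ∀ i j, IntervalIntegrable (fun σ => (G σ * F σ) i j) volume 0 1 := by
    intro i j
    simp_rw [Matrix.mul_apply]
    apply aux_ii_sum
    intro k
    apply IntervalIntegrable.mul_continuousOn
    · exact (intervalIntegrable_iff_integrableOn_Icc_of_le zero_le_one).2 (hGint i k)
    · rw [hu]; exact hFcont k j
  have hT : IntervalIntegrable (fun σ => (G σ).trace) volume 0 1 := by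
    unfold Matrix.trace
    apply aux_ii_sum
    intro k
    exact (intervalIntegrable_iff_integrableOn_Icc_of_le zero_le_one).2 (hGint k k)
  let A : ℝ → Matrix (Fin n) (Fin n) ℝ := fun s => Matrix.of fun i j =>
    (1 : Matrix (Fin n) (Fin n) ℝ) i j + ∫ σ in (0 : ℝ)..s, (G σ * F σ) i j
  have hAF : ∀ s ∈ Icc (0 : ℝ) 1, A s = F s := by
    intro s hs
    ext i j
    exact (hODE s hs i j).symm
  have h0 : (0 : ℝ) ∈ uIcc (0 : ℝ) 1 := left_mem_uIcc
  have hAac : ∀ i j, AbsolutelyContinuousOnInterval (fun s => A s i j) 0 1 := fun i j =>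
    (aux_ac_const _ 0 1).fun_add
      ((hGF i j).absolutelyContinuousOnInterval_intervalIntegral h0)
  have hdet : AbsolutelyContinuousOnInterval (fun s => (A s).det) 0 1 := by
    simp_rw [Matrix.det_apply']
    apply aux_ac_sum
    intro σ
    apply AbsolutelyContinuousOnInterval.const_mul
    apply aux_ac_prod
    intro i
    exact hAac (σ i) i
  have hE := aux_ac_exp (hT.absolutelyContinuousOnInterval_intervalIntegral h0).fun_neg
  obtain ⟨C, hC⟩ := (hdet.fun_mul hE).const_of_ae_hasDerivAt_zero (by
    have hall : ∀ᵐ x : ℝ, ∀ i j, x ∈ uIcc (0 : ℝ) 1 → ∀ c ∈ uIcc (0 : ℝ) 1,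
        HasDerivAt (fun x => ∫ t in c..x, (G t * F t) i j) ((G x * F x) i j) x := by
      rw [ae_all_iff]; intro i
      rw [ae_all_iff]; intro j
      exact (hGF i j).ae_hasDerivAt_integral
    filter_upwards [hall, hT.ae_hasDerivAt_integral] with x hx1 hx2 hx
    have d1 : HasDerivAt (fun s => (A s).det) ((G x).trace * (A x).det) x := by
      apply aux_hasDerivAt_det
      intro i j
      rw [hAF x (hu ▸ hx)]
      exact (hx1 i j hx 0 h0).const_add _
    have d2 := (hx2 hx 0 h0).fun_neg.exp
    have d3 := d1.fun_mul d2
    have z : (G x).trace * (A x).det * Real.exp (-∫ (t : ℝ) in (0 : ℝ)..x, (G t).trace) +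
      (A x).det * (Real.exp (-∫ (t : ℝ) in (0 : ℝ)..x, (G t).trace) * -(G x).trace) = 0 := by
      ring
    rw [z] at d3
    exact d3)
  have e1 := hC s (hu ▸ hs)
  have e0 := hC 0 h0
  have hA0 : A 0 = 1 := by ext i j; simp [A]
  simp only [hA0, hAF s hs, Matrix.det_one, intervalIntegral.integral_same, neg_zero,
    Real.exp_zero, one_mul] at e0 e1
  rw [← e0, Real.exp_neg] at e1
  field_simp at e1
  exact e1
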